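/- Let L = p_1^{r_1} p_2^{r_2} ⋯ p_m^{r_m} be an odd integer greater than 1, where p_1 < p_2 < ⋯ < p_m are primes and each r_i ≥ 1. Suppose one of the following holds: (a) p_1 > 3, and there is an index t with r_t = 1 and c_{p_t} = (p_t − 1)/2 such that p_t does not satisfy condition (T3) while every p_i with i ≠ t satisfies condition (T3); (b) p_1 = 3, r_1 = 1, and there is an index t ≥ 2 with r_t = 1 and c_{p_t} = e_{p_t} = (p_t − 1)/2 such that p_t does not satisfy condition (T3) while every p_i with i ≥ 2 and i ≠ t satisfies condition (T3); or (c) p_1 = 3, r_1 = 2, and every p_i with i ≥ 2 satisfies condition (T3). Then there exists a CAC C of length L and weight 3, all of whose codewords are equi-difference, whose leave Λ = Z_L \ ⋃_{I ∈ C} d(I) satisfies |Λ| = 2 and, if 3 divides L, Λ ≠ {L/3, 2L/3}. -/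

import Mathlib

open Finset

/-- The set of differences of a codeword `I ⊆ ℤ_L`. -/
def dset {L : ℕ} (I : Finset (ZMod L)) : Finset (ZMod L) :=
  (I ×ˢ I).image fun p => p.1 - p.2

/-- The set of nonzero differences. -/
def dstar {L : ℕ} (I : Finset (ZMod L)) : Finset (ZMod L) := dset I \ {0}

/-- A conflict-avoiding code of length `L` and weight `ω`. -/
def IsCAC (L ω : ℕ) (C : Finset (Finset (ZMod L))) : Prop :=
  (∀ I ∈ C, I.card = ω) ∧
  ∀ I ∈ C, ∀ J ∈ C, I ≠ J → Disjoint (dstar I) (dstar J)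

/-- An equi-difference codeword of weight three: `I = {0, g, 2g}` for some generator
`1 ≤ g ≤ L/2`. -/
def IsEquiDiff {L : ℕ} (I : Finset (ZMod L)) : Prop :=
  ∃ g : ℕ, 1 ≤ g ∧ 2 * g ≤ L ∧ I = {0, (g : ZMod L), ((2 * g : ℕ) : ZMod L)}

/-- The leave of a CAC `C` of length `L`: `Λ = ℤ_L \ ⋃_{I ∈ C} d(I)`. -/
def leave {L : ℕ} (C : Finset (Finset (ZMod L))) : Set (ZMod L) :=
  Set.univ \ ⋃ I ∈ C, (dset I : Set (ZMod L))

/-- `e_n`: the multiplicative order of `2` modulo `n`. -/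
noncomputable def eord (n : ℕ) : ℕ := orderOf (2 : ZMod n)

/-- `c_n`: the multiplicative suborder of `2` modulo `n`, i.e. the least `c ≥ 1` with
`2^c ≡ ±1 (mod n)`. -/
noncomputable def subord (n : ℕ) : ℕ :=
  sInf {c : ℕ | 1 ≤ c ∧ ((2 : ZMod n) ^ c = 1 ∨ (2 : ZMod n) ^ c = -1)}

/-- Condition (T3) on an odd prime `p`: `p ≡ 5 (mod 8)`, or `p ≡ 1 (mod 8)` and `4 ∣ e_p`. -/
def T3 (p : ℕ) : Prop := p % 8 = 5 ∨ (p % 8 = 1 ∧ 4 ∣ eord p)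

/-!
The nonzero differences of `{0, g, 2g}` are `±g` and `±2g`, so an equi-difference code of odd length
`L` amounts to a set `S` of classes in `ℤ_L / ±1` such that the pairs `{q, 2q}`, `q ∈ S`, are
disjoint. Doubling permutes these classes; its fixed points are the classes killed by `3`, and a
class of order `n` lies on a cycle of length `c_n`. Putting every second point of each cycle (and
every fixed point) into `S` covers the even cycles completely and misses exactly one class, of our
choice, on each odd cycle of length greater than one. The arithmetic hypotheses say that there is
only one such odd cycle: a prime with (T3) has even suborder, so it divides no order `n` with `c_n`
odd, and the remaining order `d = p_t`, or `d = 9`, fills a single cycle because `2 c_d = φ(d)`. The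
leave is thus `{a, -a}` with `a` not killed by `3`.
-/

open Equiv Function

/-! ### Alternating subsets of the cycles of a permutation -/

section CycleRep

variable {X : Type*} {π : Perm X} {r : X → X} {x : X} {n : ℕ}

/-- `r` picks one point on each cycle of the permutation `π`: it sends every point to the chosen
representative of its cycle. -/
structure IsCycleRep (π : Perm X) (r : X → X) : Prop where
  sameCycle (x : X) : π.SameCycle (r x) x
  eq_of_sameCycle {x y : X} : π.SameCycle x y → r x = r y

theorem exists_isCycleRep_apply_eq (π : Perm X) (a : X) : ∃ r, IsCycleRep π r ∧ r a = a := by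
  classical
  let cycle : X → Quotient (Perm.SameCycle.setoid π) := Quotient.mk _
  let rep := Function.update Quotient.out (cycle a) a
  have cycle_rep (q) : cycle (rep q) = q := by
    by_cases hq : q = cycle a
    · subst hq
      simp only [rep, update_self]
    · simp only [rep, update_of_ne hq, cycle, Quotient.out_eq]
  exact ⟨fun x ↦ rep (cycle x), ⟨fun x ↦ Quotient.exact (cycle_rep (cycle x)),
    fun h ↦ congrArg rep (Quotient.sound h)⟩, update_self ..⟩

/-- The position of `x` on its cycle, counted from the representative `r x`. -/
noncomputable def cycleIndex (π : Perm X) (r : X → X) (x : X) : ℕ :=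
  sInf {n | π^[n] (r x) = x}

namespace IsCycleRep

theorem apply_eq (hr : IsCycleRep π r) (x : X) : r (π x) = r x :=
  hr.eq_of_sameCycle (Perm.SameCycle.refl π x).apply_left

variable [Finite X]

theorem iterate_cycleIndex (hr : IsCycleRep π r) (x : X) : π^[cycleIndex π r x] (r x) = x := by
  obtain ⟨n, hn⟩ := (hr.sameCycle x).exists_nat_pow_eq
  exact Nat.sInf_mem (s := {n | π^[n] (r x) = x}) ⟨n, hn⟩

theorem minimalPeriod_apply_eq (hr : IsCycleRep π r) (x : X) :
    minimalPeriod π (r x) = minimalPeriod π x := by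
  conv_rhs => rw [← hr.iterate_cycleIndex x]
  exact (minimalPeriod_apply_iterate (π.injective.mem_periodicPts _) _).symm

theorem cycleIndex_eq_mod (hr : IsCycleRep π r) (hn : π^[n] (r x) = x) :
    cycleIndex π r x = n % minimalPeriod π x := by
  have hmod : π^[n % minimalPeriod π x] (r x) = x := by
    rw [← hr.minimalPeriod_apply_eq, iterate_mod_minimalPeriod_eq, hn]
  have hlt : n % minimalPeriod π x < minimalPeriod π x :=
    Nat.mod_lt _ (minimalPeriod_pos_of_mem_periodicPts (π.injective.mem_periodicPts x))
  refine le_antisymm (Nat.sInf_le hmod) (le_of_lt_minimalPeriod_of_iterate_eq (f := π) (x := r x)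
    (by rwa [hr.minimalPeriod_apply_eq]) ?_)
  rw [hmod, hr.iterate_cycleIndex]

theorem cycleIndex_lt_minimalPeriod (hr : IsCycleRep π r) (x : X) :
    cycleIndex π r x < minimalPeriod π x := by
  rw [hr.cycleIndex_eq_mod (hr.iterate_cycleIndex x)]
  exact Nat.mod_lt _ (minimalPeriod_pos_of_mem_periodicPts (π.injective.mem_periodicPts x))

theorem cycleIndex_apply (hr : IsCycleRep π r) (x : X) :
    cycleIndex π r (π x) =
      if cycleIndex π r x + 1 = minimalPeriod π x then 0 else cycleIndex π r x + 1 := by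
  have hlt := hr.cycleIndex_lt_minimalPeriod x
  have hiter : π^[cycleIndex π r x + 1] (r (π x)) = π x := by
    rw [hr.apply_eq, iterate_succ_apply', hr.iterate_cycleIndex]
  rw [hr.cycleIndex_eq_mod hiter, minimalPeriod_apply (π.injective.mem_periodicPts x)]
  split_ifs with hlast
  · rw [hlast, Nat.mod_self]
  · exact Nat.mod_eq_of_lt (by lia)

theorem cycleIndex_eq_zero_iff (hr : IsCycleRep π r) : cycleIndex π r x = 0 ↔ r x = x := by
  refine ⟨fun h ↦ ?_, fun h ↦ Nat.le_zero.mp (Nat.sInf_le h)⟩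
  simpa only [h, iterate_zero, id] using hr.iterate_cycleIndex x

-- Take every second point of each cycle, starting just after its representative. On an even cycle
-- this wraps around perfectly; on an odd one it misses exactly the representative.
theorem exists_set_alternating (hr : IsCycleRep π r) :
    ∃ S : Set X, (∀ x ∈ S, π x ∈ S → π x = x) ∧
      ∀ x, x ∉ S ∪ π '' S ↔ Odd (minimalPeriod π x) ∧ π x ≠ x ∧ r x = x := by
  have fixed_iff (x : X) : π (π x) = π x ↔ π x = x := π.injective.eq_iff
  refine ⟨{x | Odd (cycleIndex π r x) ∨ π x = x}, fun x hx hπx ↦ ?_, fun x ↦ ?_⟩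
  · simp only [Set.mem_ofPred_eq, fixed_iff, hr.cycleIndex_apply] at hx hπx
    grind
  · obtain ⟨y, rfl⟩ := π.surjective x
    simp only [Set.mem_union, π.injective.mem_set_image, Set.mem_ofPred_eq, fixed_iff,
      minimalPeriod_apply (π.injective.mem_periodicPts y), ← hr.cycleIndex_eq_zero_iff,
      hr.cycleIndex_apply]
    grind [hr.cycleIndex_lt_minimalPeriod y]

end IsCycleRep

end CycleRep

/-! ### Doubling modulo sign -/

section SignClass

/-- The equivalence relation `x ∼ ±x`. -/
def signSetoid (A : Type*) [InvolutiveNeg A] : Setoid A where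
  r x y := x = y ∨ x = -y
  iseqv := ⟨by grind, by grind [neg_neg], by grind [neg_neg]⟩

/-- The classes `{x, -x}`. The nonzero differences of `{0, g, 2g}` are exactly the members of the
classes of `g` and `2g`, so equi-difference codes are studied on these classes. -/
abbrev SignClass (A : Type*) [InvolutiveNeg A] : Type _ := Quotient (signSetoid A)

/-- The class `{x, -x}` of `x`. -/
def signClass {A : Type*} [InvolutiveNeg A] (x : A) : SignClass A := Quotient.mk _ x

theorem signClass_eq_iff {A : Type*} [InvolutiveNeg A] {x y : A} :
    signClass x = signClass y ↔ x = y ∨ x = -y :=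
  Quotient.eq

variable {L : ℕ} (hL : Odd L) (x : ZMod L)

/-- The permutation of `ℤ_L / ±1` induced by `x ↦ 2x`, for odd `L`. -/
def doublePerm (hL : Odd L) : Perm (SignClass (ZMod L)) :=
  Quotient.congr (Units.mulLeft (ZMod.unitOfCoprime 2 hL.coprime_two_left)) fun x y ↦ by
    change x = y ∨ x = -y ↔ _ * x = _ * y ∨ _ * x = -(_ * y)
    rw [← mul_neg, Units.mul_right_inj, Units.mul_right_inj]

theorem doublePerm_signClass : doublePerm hL (signClass x) = signClass (2 * x) := rfl

theorem iterate_doublePerm_signClass (k : ℕ) :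
    (doublePerm hL)^[k] (signClass x) = signClass (2 ^ k * x) := by
  induction k with
  | zero => rw [iterate_zero, id, pow_zero, one_mul]
  | succ k ih => rw [iterate_succ_apply', ih, doublePerm_signClass, pow_succ', mul_assoc]

end SignClass

theorem isUnit_two_of_odd {n : ℕ} (hn : Odd n) : IsUnit (2 : ZMod n) :=
  (ZMod.unitOfCoprime 2 hn.coprime_two_left).isUnit

theorem intCast_mul_eq_zero_iff {R : Type*} [Ring R] (z : ℤ) (x : R) :
    (z : R) * x = 0 ↔ (z : ZMod (addOrderOf x)) = 0 := by
  rw [ZMod.intCast_zmod_eq_zero_iff_dvd, addOrderOf_dvd_iff_zsmul_eq_zero, zsmul_eq_mul]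

theorem two_pow_mul_eq_self_or_neg_iff {R : Type*} [Ring R] (k : ℕ) (x : R) :
    2 ^ k * x = x ∨ 2 ^ k * x = -x ↔
      (2 : ZMod (addOrderOf x)) ^ k = 1 ∨ (2 : ZMod (addOrderOf x)) ^ k = -1 := by
  have hsub := intCast_mul_eq_zero_iff (2 ^ k - 1) x
  have hadd := intCast_mul_eq_zero_iff (2 ^ k + 1) x
  push_cast at hsub hadd
  rw [sub_mul, one_mul, sub_eq_zero, sub_eq_zero] at hsub
  rw [add_mul, one_mul, add_eq_zero_iff_eq_neg, add_eq_zero_iff_eq_neg] at hadd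
  rw [hsub, hadd]

/-! ### The suborder of two -/

section Suborder

variable {L n m : ℕ}

theorem minimalPeriod_doublePerm_signClass (hL : Odd L) (x : ZMod L) :
    minimalPeriod (doublePerm hL) (signClass x) = subord (addOrderOf x) := by
  rw [minimalPeriod_eq_sInf_n_pos_IsPeriodicPt, subord]
  congr 1
  ext k
  rw [Set.mem_ofPred_eq, Set.mem_ofPred_eq, IsPeriodicPt, IsFixedPt, iterate_doublePerm_signClass,
    signClass_eq_iff, two_pow_mul_eq_self_or_neg_iff]
  rfl

theorem doublePerm_signClass_eq_self_iff (hL : Odd L) (x : ZMod L) :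
    doublePerm hL (signClass x) = signClass x ↔ addOrderOf x ∣ 3 := by
  rw [doublePerm_signClass, signClass_eq_iff, addOrderOf_dvd_iff_nsmul_eq_zero, nsmul_eq_mul]
  constructor
  · rintro (h | h)
    · have hx : x = 0 := by linear_combination h
      rw [hx, mul_zero]
    · push_cast
      linear_combination h
  · intro h
    push_cast at h
    exact .inr (by linear_combination h)

theorem two_pow_eq_one_or_neg_one_iff_subord_dvd (hn : Odd n) {k : ℕ} :
    (2 : ZMod n) ^ k = 1 ∨ (2 : ZMod n) ^ k = -1 ↔ subord n ∣ k := by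
  have hperiod := minimalPeriod_doublePerm_signClass hn 1
  rw [ZMod.addOrderOf_one] at hperiod
  rw [← hperiod, ← isPeriodicPt_iff_minimalPeriod_dvd, IsPeriodicPt, IsFixedPt,
    iterate_doublePerm_signClass, signClass_eq_iff, mul_one]

theorem two_pow_subord (hn : Odd n) : (2 : ZMod n) ^ subord n = 1 ∨ (2 : ZMod n) ^ subord n = -1 :=
  (two_pow_eq_one_or_neg_one_iff_subord_dvd hn).mpr dvd_rfl

theorem subord_dvd_eord (hn : Odd n) : subord n ∣ eord n :=
  (two_pow_eq_one_or_neg_one_iff_subord_dvd hn).mp (.inl (pow_orderOf_eq_one _))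

theorem eord_dvd_two_mul_subord (hn : Odd n) : eord n ∣ 2 * subord n := by
  rw [eord, orderOf_dvd_iff_pow_eq_one, mul_comm, pow_mul]
  rcases two_pow_subord hn with h | h
  · rw [h, one_pow]
  · rw [h, neg_one_sq]

theorem two_pow_eq_one_of_dvd {k : ℕ} (hmn : m ∣ n) (h : (2 : ZMod n) ^ k = 1) :
    (2 : ZMod m) ^ k = 1 := by
  simpa only [map_pow, map_ofNat, map_one] using congrArg (ZMod.castHom hmn (ZMod m)) h

theorem two_pow_eq_neg_one_of_dvd {k : ℕ} (hmn : m ∣ n) (h : (2 : ZMod n) ^ k = -1) :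
    (2 : ZMod m) ^ k = -1 := by
  simpa only [map_pow, map_ofNat, map_neg, map_one] using congrArg (ZMod.castHom hmn (ZMod m)) h

theorem subord_dvd_subord (hn : Odd n) (hmn : m ∣ n) : subord m ∣ subord n :=
  (two_pow_eq_one_or_neg_one_iff_subord_dvd (hn.of_dvd_nat hmn)).mp <| (two_pow_subord hn).imp
    (two_pow_eq_one_of_dvd hmn) (two_pow_eq_neg_one_of_dvd hmn)

-- The sign of `2 ^ subord n` modulo `n` persists modulo `3` and `m`: a plus sign forces an even
-- exponent modulo `3`, and a minus sign is impossible modulo `m`.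
theorem even_subord_of_three_dvd (hn : Odd n) (h3 : 3 ∣ n) (hmn : m ∣ n) (hm : 2 < m)
    (he : Odd (eord m)) : Even (subord n) := by
  rcases two_pow_subord hn with hpos | hneg
  · have h2 : (2 : ZMod 3) = -1 := by decide
    have hpow : (2 : ZMod 3) ^ subord n = 1 := two_pow_eq_one_of_dvd h3 hpos
    rw [h2] at hpow
    exact (neg_one_pow_eq_one_iff_even (by decide)).mp hpow
  · have : Fact (2 < m) := ⟨hm⟩
    have hpow : (2 : ZMod m) ^ subord n = -1 := two_pow_eq_neg_one_of_dvd hmn hneg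
    have hone : (-1 : ZMod m) ^ eord m = 1 := by
      rw [← hpow, pow_right_comm, eord, pow_orderOf_eq_one, one_pow]
    rw [he.neg_one_pow] at hone
    exact absurd hone ZMod.neg_one_ne_one

theorem T3.odd (h : T3 n) : Odd n := by
  rw [Nat.odd_iff]
  rcases h with h | ⟨h, -⟩ <;> lia

theorem four_dvd_eord_of_mod_eight_eq_five (hn : n.Prime) (h5 : n % 8 = 5) : 4 ∣ eord n := by
  have : Fact n.Prime := ⟨hn⟩
  have h2 : (2 : ZMod n) ≠ 0 := by
    have hodd : Odd n := Nat.odd_iff.mpr (by lia)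
    exact (isUnit_two_of_odd hodd).ne_zero
  have hnot : ¬ eord n ∣ n / 2 := by
    rw [eord, orderOf_dvd_iff_pow_eq_one, ← ZMod.euler_criterion n h2,
      ZMod.exists_sq_eq_two_iff (by lia)]
    lia
  obtain ⟨f, hf⟩ : eord n ∣ n - 1 := orderOf_dvd_of_pow_eq_one (ZMod.pow_card_sub_one_eq_one h2)
  have hodd : Odd f := by
    by_contra hf'
    obtain ⟨g, rfl⟩ := Nat.not_odd_iff_even.mp hf'
    exact hnot ⟨g, by lia⟩
  have hcop : Nat.Coprime (2 ^ 2) f := hodd.coprime_two_left.pow_left 2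
  exact hcop.dvd_of_dvd_mul_right (by lia)

theorem T3.even_subord (h : T3 n) (hn : n.Prime) : Even (subord n) := by
  have h4 : 4 ∣ eord n := h.elim (four_dvd_eord_of_mod_eight_eq_five hn) And.right
  have := h4.trans (eord_dvd_two_mul_subord h.odd)
  rw [even_iff_two_dvd]
  lia

theorem odd_subord_of_not_T3 (hn : Odd n) (hc : 2 * subord n = n - 1) (h : ¬ T3 n) :
    Odd (subord n) := by
  by_contra heven
  obtain ⟨s, hs⟩ := Nat.not_odd_iff_even.mp heven
  have hmod2 : n % 2 = 1 := Nat.odd_iff.mp hn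
  have hmod5 : n % 8 ≠ 5 := fun h5 ↦ h (.inl h5)
  have hmod1 : n % 8 = 1 := by lia
  have h4 : 4 ∣ subord n := by lia
  exact h (.inr ⟨hmod1, h4.trans (subord_dvd_eord hn)⟩)

theorem subord_nine : subord 9 = 3 := by
  have hdvd : subord 9 ∣ 3 := (two_pow_eq_one_or_neg_one_iff_subord_dvd (by decide)).mp (by decide)
  have hne : subord 9 ≠ 1 := fun h ↦ by
    have := two_pow_subord (n := 9) (by decide)
    rw [h] at this
    revert this
    decide
  exact ((Nat.dvd_prime Nat.prime_three).mp hdvd).resolve_left hne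

end Suborder

/-! ### Codes from sets of sign classes -/

section Leave

variable {L : ℕ} {C : Finset (Finset (ZMod L))} {x : ZMod L}

theorem mem_leave_iff : x ∈ leave C ↔ ¬ ∃ I ∈ C, x ∈ dset I := by
  simp only [leave, Set.mem_sdiff, Set.mem_univ, true_and, Set.mem_iUnion, exists_prop, mem_coe]

theorem zero_notMem_leave_of_notMem_leave (hx : x ∉ leave C) : 0 ∉ leave C := by
  rw [mem_leave_iff, not_not] at hx ⊢
  obtain ⟨I, hI, hxI⟩ := hx
  obtain ⟨⟨b, c⟩, hbc, -⟩ := mem_image.mp hxI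
  have hb := (mem_product.mp hbc).1
  exact ⟨I, hI, mem_image.mpr ⟨(b, b), mem_product.mpr ⟨hb, hb⟩, sub_self b⟩⟩

end Leave

section SignClassCode

variable {L : ℕ} {S : Set (SignClass (ZMod L))}

/-- The equi-difference codeword `{0, g, 2g}`. -/
def codeword (g : ZMod L) : Finset (ZMod L) := {0, g, 2 * g}

theorem mem_dset_codeword {g x : ZMod L} :
    x ∈ dset (codeword g) ↔
      x = 0 ∨ signClass x = signClass g ∨ signClass x = signClass (2 * g) := by
  simp only [dset, codeword, mem_image, mem_product, mem_insert, mem_singleton, Prod.exists,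
    signClass_eq_iff]
  constructor
  · rintro ⟨a, b, ⟨rfl | rfl | rfl, rfl | rfl | rfl⟩, rfl⟩ <;> ring_nf <;> simp
  · rintro (rfl | (rfl | rfl) | rfl | rfl)
    · exact ⟨0, 0, by simp⟩
    · exact ⟨x, 0, by simp⟩
    · exact ⟨0, g, by simp⟩
    · exact ⟨2 * g, 0, by simp⟩
    · exact ⟨0, 2 * g, by simp⟩

theorem card_codeword (hL : Odd L) {g : ZMod L} (hg : g ≠ 0) : (codeword g).card = 3 := by
  have h2g : 2 * g ≠ 0 := fun h ↦ hg ((isUnit_two_of_odd hL).mul_right_eq_zero.mp h)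
  exact card_eq_three.mpr ⟨0, g, 2 * g, hg.symm, h2g.symm, fun h ↦ hg (by linear_combination -h),
    rfl⟩

theorem exists_signClass_natCast_eq [NeZero L] {x : ZMod L} (hx : x ≠ 0) :
    ∃ g ∈ Icc 1 (L / 2), signClass (g : ZMod L) = signClass x := by
  refine ⟨x.valMinAbs.natAbs, mem_Icc.mpr ⟨?_, x.natAbs_valMinAbs_le⟩, ?_⟩
  · rwa [Nat.one_le_iff_ne_zero, Int.natAbs_ne_zero, ne_eq, ZMod.valMinAbs_eq_zero]
  · rw [ZMod.natCast_natAbs_valMinAbs, signClass_eq_iff]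
    split_ifs <;> simp

theorem signClass_natCast_injOn :
    Set.InjOn (fun g : ℕ ↦ signClass (g : ZMod L)) (Icc 1 (L / 2)) := by
  intro g hg h hh hgh
  have := ZMod.natAbs_valMinAbs_eq_natAbs_valMinAbs.mpr (signClass_eq_iff.mp hgh)
  rwa [ZMod.valMinAbs_natCast_of_le_half (mem_Icc.mp hg).2,
    ZMod.valMinAbs_natCast_of_le_half (mem_Icc.mp hh).2] at this

theorem natCast_ne_zero_of_mem_Icc {g : ℕ} (hg : g ∈ Icc 1 (L / 2)) : (g : ZMod L) ≠ 0 := by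
  rw [ne_eq, ZMod.natCast_eq_zero_iff]
  rw [mem_Icc] at hg
  exact Nat.not_dvd_of_pos_of_lt (by lia) (by lia)

open Classical in
/-- The code of the codewords `{0, g, 2g}` with `1 ≤ g ≤ L / 2` and `±g` in `S`. -/
noncomputable def signClassCode (S : Set (SignClass (ZMod L))) : Finset (Finset (ZMod L)) :=
  ({g ∈ Icc 1 (L / 2) | signClass (g : ZMod L) ∈ S} : Finset ℕ).image fun g : ℕ ↦
    codeword (g : ZMod L)

theorem mem_signClassCode {I : Finset (ZMod L)} : I ∈ signClassCode S ↔
    ∃ g ∈ Icc 1 (L / 2), signClass (g : ZMod L) ∈ S ∧ codeword (g : ZMod L) = I := by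
  simp only [signClassCode, mem_image, mem_filter, and_assoc]

theorem isEquiDiff_of_mem_signClassCode {I : Finset (ZMod L)} (hI : I ∈ signClassCode S) :
    IsEquiDiff I := by
  obtain ⟨g, hg, -, rfl⟩ := mem_signClassCode.mp hI
  rw [mem_Icc] at hg
  exact ⟨g, hg.1, by lia, by rw [codeword, Nat.cast_mul, Nat.cast_ofNat]⟩

theorem isCAC_signClassCode (hL : Odd L) (hS : ∀ q ∈ S, doublePerm hL q ∈ S → doublePerm hL q = q) :
    IsCAC L 3 (signClassCode S) := by
  refine ⟨fun I hI ↦ ?_, fun I hI J hJ hne ↦ disjoint_left.mpr fun x hxI hxJ ↦ hne ?_⟩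
  · obtain ⟨g, hg, -, rfl⟩ := mem_signClassCode.mp hI
    exact card_codeword hL (natCast_ne_zero_of_mem_Icc hg)
  · obtain ⟨g, hg, hgS, rfl⟩ := mem_signClassCode.mp hI
    obtain ⟨h, hh, hhS, rfl⟩ := mem_signClassCode.mp hJ
    simp only [dstar, mem_sdiff, mem_dset_codeword, mem_singleton,
      ← doublePerm_signClass hL] at hxI hxJ
    suffices signClass (g : ZMod L) = signClass (h : ZMod L) by
      rw [signClass_natCast_injOn hg hh this]
    rcases hxI.1.resolve_left hxI.2 with hgx | hgx <;>
      rcases hxJ.1.resolve_left hxJ.2 with hhx | hhx <;> rw [hgx] at hhx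
    · exact hhx
    · rw [hhx, hS _ hhS (hhx ▸ hgS)]
    · rw [← hhx, hS _ hgS (hhx ▸ hhS)]
    · exact (doublePerm hL).injective hhx

theorem mem_leave_signClassCode (hL : Odd L) {x : ZMod L} (hx : x ≠ 0) :
    x ∈ leave (signClassCode S) ↔ signClass x ∉ S ∪ doublePerm hL '' S := by
  have : NeZero L := ⟨hL.pos.ne'⟩
  have exists_generator {y : ZMod L} (hy : y ≠ 0) (hyS : signClass y ∈ S) :
      ∃ g : ZMod L, codeword g ∈ signClassCode S ∧ signClass g = signClass y := by
    obtain ⟨g, hg, hgy⟩ := exists_signClass_natCast_eq hy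
    exact ⟨g, mem_signClassCode.mpr ⟨g, hg, hgy ▸ hyS, rfl⟩, hgy⟩
  rw [mem_leave_iff, not_iff_not]
  constructor
  · rintro ⟨I, hI, hxI⟩
    obtain ⟨g, -, hgS, rfl⟩ := mem_signClassCode.mp hI
    rcases mem_dset_codeword.mp hxI with h | h | h
    · exact absurd h hx
    · exact .inl (h ▸ hgS)
    · exact .inr ⟨_, hgS, h.symm⟩
  · rintro (hxS | ⟨⟨y⟩, hyS, hyx : signClass (2 * y) = signClass x⟩)
    · obtain ⟨g, hg, hgx⟩ := exists_generator hx hxS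
      exact ⟨_, hg, mem_dset_codeword.mpr (.inr (.inl hgx.symm))⟩
    · have hy : y ≠ 0 := by
        rintro rfl
        rw [mul_zero, signClass_eq_iff, eq_comm, zero_eq_neg, or_self] at hyx
        exact hx hyx
      obtain ⟨g, hg, hgy⟩ := exists_generator hy hyS
      rw [← doublePerm_signClass hL, ← hgy, doublePerm_signClass] at hyx
      exact ⟨_, hg, mem_dset_codeword.mpr (.inr (.inr hyx.symm))⟩

end SignClassCode

/-! ### The odd cycle of doubling -/

section SingleCycle

variable {L : ℕ}

theorem addOrderOf_mul_of_isUnit {R : Type*} [Ring R] {u : R} (hu : IsUnit u) (x : R) :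
    addOrderOf (u * x) = addOrderOf x :=
  addOrderOf_injective (AddMonoidHom.mulLeft u) hu.mul_right_injective x

theorem addOrderOf_units_smul {A : Type*} [AddCommGroup A] (u : ℤˣ) (x : A) :
    addOrderOf (u • x) = addOrderOf x := by
  rcases Int.units_eq_one_or u with rfl | rfl
  · rw [one_smul]
  · rw [Units.neg_smul, one_smul, addOrderOf_neg]

theorem signClass_units_smul {A : Type*} [AddCommGroup A] (u : ℤˣ) (x : A) :
    signClass (u • x) = signClass x := by
  rw [signClass_eq_iff]
  rcases Int.units_eq_one_or u with rfl | rfl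
  · exact .inl (one_smul ..)
  · exact .inr (by rw [Units.neg_smul, one_smul])

theorem units_smul_left_injective (hL : Odd L) {x : ZMod L} (hx : x ≠ 0) :
    Injective fun u : ℤˣ ↦ u • x := by
  have hne : x ≠ -x := ZMod.ne_neg_self hL hx
  intro u v huv
  rcases Int.units_eq_one_or u with rfl | rfl <;> rcases Int.units_eq_one_or v with rfl | rfl <;>
    simp_all [hne.symm]

theorem injOn_units_smul_two_pow_mul (hL : Odd L) {a : ZMod L} (ha : a ≠ 0) :
    Set.InjOn (fun ku : ℕ × ℤˣ ↦ ku.2 • (2 ^ ku.1 * a))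
      (range (subord (addOrderOf a)) ×ˢ univ : Finset (ℕ × ℤˣ)) := by
  rintro ⟨i, u⟩ hi ⟨j, v⟩ hj hij
  rw [mem_coe, mem_product, mem_range, ← minimalPeriod_doublePerm_signClass hL] at hi hj
  obtain rfl : i = j := by
    refine iterate_injOn_Iio_minimalPeriod (f := doublePerm hL) (x := signClass a) hi.1 hj.1 ?_
    simpa only [signClass_units_smul, iterate_doublePerm_signClass] using congrArg signClass hij
  exact congrArg (i, ·)
    (units_smul_left_injective hL (((isUnit_two_of_odd hL).pow i).mul_right_eq_zero.not.mpr ha) hij)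

-- The `2 * subord d` elements `± 2 ^ k * a` with `k < subord d` are pairwise distinct and of
-- order `d`, so they exhaust the `φ d` elements of order `d`.
theorem sameCycle_of_two_mul_subord_eq_totient (hL : Odd L) {a x : ZMod L}
    (hx : addOrderOf x = addOrderOf a) (hc : 2 * subord (addOrderOf a) = (addOrderOf a).totient) :
    (doublePerm hL).SameCycle (signClass a) (signClass x) := by
  have : NeZero L := ⟨hL.pos.ne'⟩
  have ha : a ≠ 0 := by
    rintro rfl
    rw [addOrderOf_zero, Nat.totient_one] at hc
    lia
  have mapsTo : Set.MapsTo (fun ku : ℕ × ℤˣ ↦ ku.2 • (2 ^ ku.1 * a))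
      (range (subord (addOrderOf a)) ×ˢ univ : Finset (ℕ × ℤˣ))
      ({y | addOrderOf y = addOrderOf a} : Finset (ZMod L)) := by
    rintro ⟨k, u⟩ -
    rw [mem_coe, mem_filter_univ, addOrderOf_units_smul,
      addOrderOf_mul_of_isUnit ((isUnit_two_of_odd hL).pow k)]
  have card_le : #{y : ZMod L | addOrderOf y = addOrderOf a} ≤
      #(range (subord (addOrderOf a)) ×ˢ (univ : Finset ℤˣ)) := by
    rw [IsAddCyclic.card_addOrderOf_eq_totient addOrderOf_dvd_card, ← hc, card_product,
      card_range, card_univ, Fintype.card_units_int, mul_comm]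
  obtain ⟨⟨k, u⟩, -, rfl⟩ := surjOn_of_injOn_of_card_le _ mapsTo
    (injOn_units_smul_two_pow_mul hL ha) card_le (mem_coe.mpr ((mem_filter_univ x).mpr hx))
  refine ⟨k, ?_⟩
  rw [zpow_natCast, ← Perm.iterate_eq_pow, iterate_doublePerm_signClass, signClass_units_smul]

end SingleCycle

section UniqueOddCycle

variable {L d : ℕ}

theorem exists_addOrderOf_eq_of_dvd (hL : L ≠ 0) (hd : d ∣ L) : ∃ a : ZMod L, addOrderOf a = d := by
  obtain ⟨k, rfl⟩ := hd
  refine ⟨(k : ZMod (d * k)), ?_⟩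
  rw [ZMod.addOrderOf_coe k hL, Nat.gcd_mul_left_left,
    Nat.mul_div_cancel d (Nat.pos_of_ne_zero (right_ne_zero_of_mul hL))]

theorem addOrderOf_dvd_three_of_mem_thirds (hL : 3 ∣ L) {a : ZMod L}
    (ha : a ∈ ({((L / 3 : ℕ) : ZMod L), ((2 * L / 3 : ℕ) : ZMod L)} : Set (ZMod L))) :
    addOrderOf a ∣ 3 := by
  rw [addOrderOf_dvd_iff_nsmul_eq_zero, nsmul_eq_mul]
  obtain ⟨k, rfl⟩ := hL
  rcases ha with rfl | rfl <;> rw [← Nat.cast_mul, ZMod.natCast_eq_zero_iff]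
  · exact ⟨1, by lia⟩
  · exact ⟨2, by lia⟩

/-- Doubling on `ℤ_L / ±1` has exactly one cycle of odd length besides its fixed points, and the
elements on that cycle have order `d`. A class of order `n` is fixed iff `n ∣ 3` and lies on a cycle
of length `subord n` in general, so this is expressed through the divisors of `L`; the condition on
`φ d` says that the elements of order `d` form a single cycle. -/
structure IsUniqueOddCycleOrder (L d : ℕ) : Prop where
  dvd : d ∣ L
  not_dvd_three : ¬ d ∣ 3
  odd_subord : Odd (subord d)
  two_mul_subord : 2 * subord d = d.totient
  eq_of_odd_subord {n : ℕ} : n ∣ L → ¬ n ∣ 3 → Odd (subord n) → n = d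

theorem isUniqueOddCycleOrder_of_prime {q : ℕ} (hL : Odd L) (hqL : q ∣ L) (hq : q.Prime)
    (hq3 : 3 < q) (hc : 2 * subord q = q - 1) (hT3 : ¬ T3 q)
    (huniq : ∀ n, n ∣ L → ¬ n ∣ 3 → Odd (subord n) → n = q) : IsUniqueOddCycleOrder L q where
  dvd := hqL
  not_dvd_three := Nat.not_dvd_of_pos_of_lt three_pos hq3
  odd_subord := odd_subord_of_not_T3 (hL.of_dvd_nat hqL) hc hT3
  two_mul_subord := by rw [hc, Nat.totient_prime hq]
  eq_of_odd_subord := huniq _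

namespace IsUniqueOddCycleOrder

theorem ne_zero (hd : IsUniqueOddCycleOrder L d) {a : ZMod L} (ha : addOrderOf a = d) : a ≠ 0 := by
  rintro rfl
  exact hd.not_dvd_three (by rw [← ha, addOrderOf_zero]; exact one_dvd 3)

theorem exists_set_alternating (hd : IsUniqueOddCycleOrder L d) (hL : Odd L) {a : ZMod L}
    (ha : addOrderOf a = d) :
    ∃ S : Set (SignClass (ZMod L)), (∀ q ∈ S, doublePerm hL q ∈ S → doublePerm hL q = q) ∧
      ∀ x, signClass x ∉ S ∪ doublePerm hL '' S ↔ signClass x = signClass a := by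
  have : NeZero L := ⟨hL.pos.ne'⟩
  obtain ⟨r, hr, hra⟩ := exists_isCycleRep_apply_eq (doublePerm hL) (signClass a)
  obtain ⟨S, hS, uncovered_iff⟩ := hr.exists_set_alternating
  refine ⟨S, hS, fun x ↦ ?_⟩
  rw [uncovered_iff]
  constructor
  · rintro ⟨hodd, hmoved, hrx⟩
    rw [minimalPeriod_doublePerm_signClass] at hodd
    rw [ne_eq, doublePerm_signClass_eq_self_iff] at hmoved
    have hx : addOrderOf x = d :=
      hd.eq_of_odd_subord (addOrderOf_dvd_card.trans (ZMod.card L).dvd) hmoved hodd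
    have hsame : (doublePerm hL).SameCycle (signClass a) (signClass x) :=
      sameCycle_of_two_mul_subord_eq_totient hL (hx.trans ha.symm) (ha ▸ hd.two_mul_subord)
    rw [← hrx, ← hr.eq_of_sameCycle hsame, hra]
  · intro hxa
    rw [hxa, minimalPeriod_doublePerm_signClass, ne_eq, doublePerm_signClass_eq_self_iff, ha]
    exact ⟨hd.odd_subord, hd.not_dvd_three, hra⟩

theorem exists_leave_eq_pair (hd : IsUniqueOddCycleOrder L d) (hL : Odd L) {a : ZMod L}
    (ha : addOrderOf a = d) :
    ∃ C : Finset (Finset (ZMod L)), IsCAC L 3 C ∧ (∀ I ∈ C, IsEquiDiff I) ∧ leave C = {a, -a} := by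
  obtain ⟨S, hS, uncovered_iff⟩ := hd.exists_set_alternating hL ha
  have mem_leave_iff_eq {x : ZMod L} (hx : x ≠ 0) :
      x ∈ leave (signClassCode S) ↔ signClass x = signClass a :=
    (mem_leave_signClassCode hL hx).trans (uncovered_iff x)
  have ha0 : a ≠ 0 := hd.ne_zero ha
  have h2a : 2 * a ∉ leave (signClassCode S) := by
    have h2a0 : 2 * a ≠ 0 :=
      (isUnit_two_of_odd hL).mul_right_eq_zero.not.mpr ha0
    rw [mem_leave_iff_eq h2a0, ← doublePerm_signClass hL, doublePerm_signClass_eq_self_iff, ha]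
    exact hd.not_dvd_three
  refine ⟨signClassCode S, isCAC_signClassCode hL hS, fun I ↦ isEquiDiff_of_mem_signClassCode, ?_⟩
  ext x
  by_cases hx : x = 0
  · rw [hx]
    exact iff_of_false (zero_notMem_leave_of_notMem_leave h2a) (by simp [ha0, ha0.symm])
  · rw [mem_leave_iff_eq hx, signClass_eq_iff]
    rfl

end IsUniqueOddCycleOrder

end UniqueOddCycle

/-! ### Orders with odd suborder -/

section Factorization

variable {ι : Type*} {p r : ι → ℕ} {n : ℕ}

theorem dvd_prod_of_odd_subord {s t : Finset ι} (hp : ∀ i ∈ t, (p i).Prime) (hst : s ⊆ t)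
    (hT3 : ∀ i ∈ t, i ∉ s → T3 (p i)) (hn : Odd n) (hdvd : n ∣ ∏ i ∈ t, p i ^ r i)
    (hc : Odd (subord n)) : n ∣ ∏ i ∈ s, p i ^ r i := by
  classical
  rw [← prod_sdiff hst] at hdvd
  refine Nat.Coprime.dvd_of_dvd_mul_left (Nat.Coprime.prod_right fun i hi ↦ .pow_right _ ?_) hdvd
  obtain ⟨hit, his⟩ := mem_sdiff.mp hi
  rw [Nat.coprime_comm, (hp i hit).coprime_iff_not_dvd]
  intro hin
  have heven : Even (subord n) :=
    ((hT3 i hit his).even_subord (hp i hit)).trans_dvd (subord_dvd_subord hn hin)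
  exact Nat.not_even_iff_odd.mpr hc heven

variable [Fintype ι]

theorem isUniqueOddCycleOrder_of_forall_ne_T3 (hp : ∀ i, (p i).Prime)
    (hodd : Odd (∏ i, p i ^ r i)) {t : ι} (hr : r t = 1) (h3 : 3 < p t)
    (hc : 2 * subord (p t) = p t - 1) (ht : ¬ T3 (p t)) (hT3 : ∀ i, i ≠ t → T3 (p i)) :
    IsUniqueOddCycleOrder (∏ i, p i ^ r i) (p t) := by
  have hdvd : p t ∣ ∏ i, p i ^ r i := by
    simpa only [hr, pow_one] using dvd_prod_of_mem (fun i ↦ p i ^ r i) (mem_univ t)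
  refine isUniqueOddCycleOrder_of_prime hodd hdvd (hp t) h3 hc ht fun n hn hn3 hcn ↦ ?_
  have hnt : n ∣ ∏ i ∈ {t}, p i ^ r i :=
    dvd_prod_of_odd_subord (fun i _ ↦ hp i) (subset_univ _)
      (fun i _ hi ↦ hT3 i (notMem_singleton.mp hi)) (hodd.of_dvd_nat hn) hn hcn
  rw [prod_singleton, hr, pow_one] at hnt
  exact ((Nat.dvd_prime (hp t)).mp hnt).resolve_left fun h1 ↦ hn3 (h1 ▸ one_dvd 3)

theorem isUniqueOddCycleOrder_of_apply_eq_three (hp : ∀ i, (p i).Prime)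
    (hodd : Odd (∏ i, p i ^ r i)) {z t : ι} (hpz : p z = 3) (hrz : r z = 1) (hr : r t = 1)
    (h3 : 3 < p t) (hce : subord (p t) = eord (p t)) (hc : 2 * subord (p t) = p t - 1)
    (ht : ¬ T3 (p t)) (hT3 : ∀ i, i ≠ z → i ≠ t → T3 (p i)) :
    IsUniqueOddCycleOrder (∏ i, p i ^ r i) (p t) := by
  classical
  have hdvd : p t ∣ ∏ i, p i ^ r i := by
    simpa only [hr, pow_one] using dvd_prod_of_mem (fun i ↦ p i ^ r i) (mem_univ t)
  have he : Odd (eord (p t)) := hce ▸ odd_subord_of_not_T3 (hodd.of_dvd_nat hdvd) hc ht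
  have hzt : z ≠ t := by
    rintro rfl
    lia
  refine isUniqueOddCycleOrder_of_prime hodd hdvd (hp t) h3 hc ht fun n hn hn3 hcn ↦ ?_
  have hnzt : n ∣ ∏ i ∈ {z, t}, p i ^ r i :=
    dvd_prod_of_odd_subord (fun i _ ↦ hp i) (subset_univ _)
      (fun i _ hi ↦ hT3 i (by grind) (by grind)) (hodd.of_dvd_nat hn) hn hcn
  rw [prod_pair hzt, hpz, hrz, hr, pow_one, pow_one] at hnzt
  have htn : p t ∣ n := by
    by_contra htn
    have hcop : n.Coprime (p t) := ((hp t).coprime_iff_not_dvd.mpr htn).symm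
    exact hn3 (hcop.dvd_of_dvd_mul_right hnzt)
  have h3n : ¬ 3 ∣ n := fun h3n ↦ Nat.not_even_iff_odd.mpr hcn <|
    even_subord_of_three_dvd (hodd.of_dvd_nat hn) h3n htn (by lia) he
  have hcop : n.Coprime 3 := (Nat.prime_three.coprime_iff_not_dvd.mpr h3n).symm
  exact Nat.dvd_antisymm (hcop.dvd_of_dvd_mul_left hnzt) htn

theorem isUniqueOddCycleOrder_nine (hp : ∀ i, (p i).Prime) (hodd : Odd (∏ i, p i ^ r i)) {z : ι}
    (hpz : p z = 3) (hrz : r z = 2) (hT3 : ∀ i, i ≠ z → T3 (p i)) :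
    IsUniqueOddCycleOrder (∏ i, p i ^ r i) 9 where
  dvd := by
    have hdvd := dvd_prod_of_mem (fun i ↦ p i ^ r i) (mem_univ z)
    rwa [hpz, hrz] at hdvd
  not_dvd_three := by decide
  odd_subord := by rw [subord_nine]; decide
  two_mul_subord := by rw [subord_nine]; decide
  eq_of_odd_subord {n} hn hn3 hcn := by
    have hnz : n ∣ ∏ i ∈ {z}, p i ^ r i :=
      dvd_prod_of_odd_subord (fun i _ ↦ hp i) (subset_univ _)
        (fun i _ hi ↦ hT3 i (notMem_singleton.mp hi)) (hodd.of_dvd_nat hn) hn hcn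
    rw [prod_singleton, hpz, hrz] at hnz
    exact Nat.eq_prime_pow_of_dvd_least_prime_pow Nat.prime_three hn3 hnz

end Factorization

theorem exists_equidiff_CAC_leave_two (L m : ℕ) (hm : 0 < m)
    (p r : Fin m → ℕ) (hodd : Odd L) (hL : 1 < L)
    (hp : ∀ i, (p i).Prime) (hmono : StrictMono p) (hr : ∀ i, 1 ≤ r i)
    (hfac : L = ∏ i, p i ^ r i)
    (hcond :
      (3 < p ⟨0, hm⟩ ∧ ∃ t, r t = 1 ∧ 2 * subord (p t) = p t - 1 ∧ ¬ T3 (p t) ∧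
        ∀ i, i ≠ t → T3 (p i)) ∨
      (p ⟨0, hm⟩ = 3 ∧ r ⟨0, hm⟩ = 1 ∧ ∃ t, t ≠ ⟨0, hm⟩ ∧ r t = 1 ∧
        subord (p t) = eord (p t) ∧ 2 * subord (p t) = p t - 1 ∧ ¬ T3 (p t) ∧
        ∀ i, i ≠ ⟨0, hm⟩ → i ≠ t → T3 (p i)) ∨
      (p ⟨0, hm⟩ = 3 ∧ r ⟨0, hm⟩ = 2 ∧ ∀ i, i ≠ ⟨0, hm⟩ → T3 (p i))) :
    ∃ C : Finset (Finset (ZMod L)), IsCAC L 3 C ∧ (∀ I ∈ C, IsEquiDiff I) ∧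
      (leave C).ncard = 2 ∧
      (3 ∣ L → leave C ≠ {((L / 3 : ℕ) : ZMod L), ((2 * L / 3 : ℕ) : ZMod L)}) := by
  obtain ⟨d, hd⟩ : ∃ d, IsUniqueOddCycleOrder L d := by
    rw [hfac] at hodd ⊢
    rcases hcond with ⟨h3, t, hrt, hc, ht, hT3⟩ | ⟨hp0, hr0, t, ht0, hrt, hce, hc, ht, hT3⟩ |
      ⟨hp0, hr0, hT3⟩
    · have h3t : 3 < p t := h3.trans_le (hmono.monotone (Nat.zero_le t))
      exact ⟨p t, isUniqueOddCycleOrder_of_forall_ne_T3 hp hodd hrt h3t hc ht hT3⟩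
    · have h3t : 3 < p t := hp0 ▸ hmono (Nat.pos_of_ne_zero (Fin.val_ne_iff.mpr ht0))
      exact ⟨p t, isUniqueOddCycleOrder_of_apply_eq_three hp hodd hp0 hr0 hrt h3t hce hc ht hT3⟩
    · exact ⟨9, isUniqueOddCycleOrder_nine hp hodd hp0 hr0 hT3⟩
  obtain ⟨a, ha⟩ := exists_addOrderOf_eq_of_dvd hodd.pos.ne' hd.dvd
  obtain ⟨C, hCAC, hequi, hleave⟩ := hd.exists_leave_eq_pair hodd ha
  refine ⟨C, hCAC, hequi, ?_, fun h3 hthirds ↦ hd.not_dvd_three ?_⟩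
  · rw [hleave, Set.ncard_pair (ZMod.ne_neg_self hodd (hd.ne_zero ha))]
  · rw [← ha]
    exact addOrderOf_dvd_three_of_mem_thirds h3 (hthirds ▸ hleave ▸ Set.mem_insert a _)
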